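/- Let 0 < p₁ < p₂ and let A = [[0, 1], [−p₁p₂, −(p₁+p₂)]] be the companion matrix of (s+p₁)(s+p₂). Then the minimum of ‖S‖∞·‖S⁻¹‖∞ over all invertible 2×2 matrices S such that S⁻¹AS is diagonal equals (p₁ + p₂ + 2·max(1, p₁p₂)) / (p₂ − p₁). -/

import Mathlib

/-!
Fix a diagonalizer `V` of a matrix `A` with distinct eigenvalues. For any other diagonalizer `S`,
the matrix `V⁻¹ * S` has at most one nonzero entry per column, so taking absolute values commutes
with the product `V * (V⁻¹ * S)`. Hence `|V| |V⁻¹| ≤ |V| |V⁻¹ S| |S⁻¹| = |S| |S⁻¹|` entrywise, and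
`‖S‖ ‖S⁻¹‖ ≥ ‖|V| |V⁻¹|‖` by submultiplicativity. Equality holds when the columns of `V` are
rescaled so that every row of the inverse has absolute sum one.
-/

open Matrix

/-- The matrix norm induced by the vector `∞`-norm: the maximum absolute row sum. -/
noncomputable def mNorm {ι κ : Type*} [Fintype ι] [Fintype κ] (M : Matrix ι κ ℝ) : ℝ :=
  ⨆ i, ∑ j, |M i j|

/-- The sum of the absolute values of the entries of row `i`, so that `mNorm` is the largest of
these sums; the optimal column scaling of a diagonalizer is by the row sums of its inverse. -/
def absRowSum {m n : Type*} [Fintype n] (M : Matrix m n ℝ) (i : m) : ℝ :=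
  ∑ j, |M i j|

section Norm

variable {l m n : Type*} [Fintype n]

theorem absRowSum_nonneg (M : Matrix m n ℝ) (i : m) : 0 ≤ absRowSum M i :=
  Finset.sum_nonneg fun _ _ ↦ abs_nonneg _

theorem absRowSum_le_mNorm [Fintype m] (M : Matrix m n ℝ) (i : m) : absRowSum M i ≤ mNorm M :=
  le_ciSup (f := absRowSum M) (Set.finite_range _).bddAbove i

theorem mNorm_fin_two (M : Matrix (Fin 2) n ℝ) :
    mNorm M = max (absRowSum M 0) (absRowSum M 1) :=
  le_antisymm
    (ciSup_le (Fin.forall_fin_two.2 ⟨le_max_left _ _, le_max_right _ _⟩))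
    (max_le (absRowSum_le_mNorm M 0) (absRowSum_le_mNorm M 1))

theorem mNorm_le_mNorm_of_abs_le [Fintype m] {M N : Matrix m n ℝ} (h : ∀ i j, |M i j| ≤ |N i j|) :
    mNorm M ≤ mNorm N :=
  ciSup_mono (Set.finite_range _).bddAbove fun i ↦ Finset.sum_le_sum fun j _ ↦ h i j

theorem mNorm_map_abs [Fintype m] (M : Matrix m n ℝ) : mNorm (M.map abs) = mNorm M := by
  simp only [mNorm, map_apply, abs_abs]

open scoped Matrix.Norms.Operator in
theorem mNorm_eq_norm [Fintype m] (M : Matrix m n ℝ) : mNorm M = ‖M‖ := by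
  simp only [mNorm, linfty_opNorm_def, Finset.sup_univ_eq_ciSup, NNReal.coe_iSup,
    NNReal.coe_sum, coe_nnnorm, Real.norm_eq_abs]

theorem mNorm_mul_le [Fintype l] [Fintype m] (M : Matrix l m ℝ) (N : Matrix m n ℝ) :
    mNorm (M * N) ≤ mNorm M * mNorm N := by
  simpa only [mNorm_eq_norm] using linfty_opNorm_mul M N

open scoped Matrix.Norms.Operator in
theorem mNorm_smul [Fintype m] (c : ℝ) (M : Matrix m n ℝ) : mNorm (c • M) = |c| * mNorm M := by
  simp only [mNorm_eq_norm, norm_smul, Real.norm_eq_abs]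

end Norm

section AbsoluteValues

variable {k l m n : Type*} [Fintype m]

theorem map_abs_mul_map_abs_nonneg (M : Matrix l m ℝ) (N : Matrix m n ℝ) (i : l) (j : n) :
    0 ≤ (M.map abs * N.map abs) i j :=
  Finset.sum_nonneg fun _ _ ↦ mul_nonneg (abs_nonneg _) (abs_nonneg _)

theorem abs_mul_apply_le (M : Matrix l m ℝ) (N : Matrix m n ℝ) (i : l) (j : n) :
    |(M * N) i j| ≤ (M.map abs * N.map abs) i j := by
  simpa only [mul_apply, map_apply, abs_mul] using
    Finset.abs_sum_le_sum_abs (fun a ↦ M i a * N a j) Finset.univ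

theorem map_abs_mul_of_subsingleton_support (M : Matrix l m ℝ) {N : Matrix m n ℝ}
    (hN : ∀ j, (Function.support (N.col j)).Subsingleton) :
    (M * N).map abs = M.map abs * N.map abs := by
  ext i j
  simp only [map_apply, mul_apply, ← abs_mul]
  rcases (hN j).eq_empty_or_singleton with hj | ⟨a, hj⟩
  · have hzero : ∀ b, N b j = 0 := congrFun (Function.support_eq_empty_iff.1 hj)
    simp only [hzero, mul_zero, abs_zero, Finset.sum_const_zero]
  · have hzero : ∀ b, b ≠ a → N b j = 0 := fun b hb ↦
      Function.notMem_support.1 (hj ▸ hb : b ∉ Function.support (N.col j))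
    rw [Fintype.sum_eq_single a fun b hb ↦ by rw [hzero b hb, mul_zero],
      Fintype.sum_eq_single a fun b hb ↦ by rw [hzero b hb, mul_zero, abs_zero]]

theorem mNorm_map_abs_mul_map_abs_le [Fintype k] [Fintype l] [Fintype n] (V : Matrix k l ℝ)
    {W : Matrix l m ℝ} (T : Matrix m n ℝ)
    (hW : ∀ j, (Function.support (W.col j)).Subsingleton) :
    mNorm (V.map abs * (W * T).map abs) ≤ mNorm (V * W) * mNorm T := by
  have entrywise (i : k) (j : n) : (V.map abs * (W * T).map abs) i j ≤
      ((V * W).map abs * T.map abs) i j := by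
    rw [map_abs_mul_of_subsingleton_support V hW, Matrix.mul_assoc]
    exact Finset.sum_le_sum fun a _ ↦
      mul_le_mul_of_nonneg_left (abs_mul_apply_le W T a j) (abs_nonneg _)
  calc mNorm (V.map abs * (W * T).map abs)
      ≤ mNorm ((V * W).map abs * T.map abs) := mNorm_le_mNorm_of_abs_le fun i j ↦
        abs_le_abs_of_nonneg (map_abs_mul_map_abs_nonneg V (W * T) i j) (entrywise i j)
    _ ≤ mNorm (V * W) * mNorm T := by
        simpa only [mNorm_map_abs] using mNorm_mul_le ((V * W).map abs) (T.map abs)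

end AbsoluteValues

section Scaling

variable {l m n : Type*} [Fintype l] [Fintype m] [Fintype n] [DecidableEq m]

theorem absRowSum_pos {M : Matrix m m ℝ} (hM : IsUnit M) (i : m) : 0 < absRowSum M i := by
  refine (absRowSum_nonneg M i).lt_of_ne' fun hsum ↦ ?_
  have hrow (j : m) : M i j = 0 := abs_eq_zero.1 <|
    (Finset.sum_eq_zero_iff_of_nonneg fun j _ ↦ abs_nonneg (M i j)).1 hsum j (Finset.mem_univ j)
  exact ((isUnit_iff_isUnit_det M).1 hM).ne_zero (det_eq_zero_of_row_eq_zero i hrow)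

theorem mNorm_mul_diagonal_absRowSum (V : Matrix l m ℝ) (W : Matrix m n ℝ) :
    mNorm (V * diagonal (absRowSum W)) = mNorm (V.map abs * W.map abs) := by
  have abs_absRowSum (a : m) : |absRowSum W a| = absRowSum W a :=
    abs_of_nonneg (absRowSum_nonneg W a)
  refine congrArg iSup (funext fun i ↦ ?_)
  calc ∑ a, |(V * diagonal (absRowSum W)) i a|
      = ∑ a, ∑ j, |V i a| * |W a j| := by
        simp only [mul_diagonal, abs_mul, abs_absRowSum]
        simp only [absRowSum, Finset.mul_sum]
    _ = ∑ j, ∑ a, |V i a| * |W a j| := Finset.sum_comm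
    _ = ∑ j, |(V.map abs * W.map abs) i j| :=
        Finset.sum_congr rfl fun j _ ↦ (abs_of_nonneg (map_abs_mul_map_abs_nonneg V W i j)).symm

theorem mNorm_diagonal_inv_absRowSum_mul [Nonempty m] {W : Matrix m n ℝ}
    (hW : ∀ i, 0 < absRowSum W i) : mNorm (diagonal (absRowSum W)⁻¹ * W) = 1 := by
  have hrow (i : m) : ∑ j, |(diagonal (absRowSum W)⁻¹ * W) i j| = 1 := by
    simp only [diagonal_mul, Pi.inv_apply, abs_mul, ← Finset.mul_sum, abs_inv, abs_of_pos (hW i)]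
    exact inv_mul_cancel₀ (hW i).ne'
  simp only [mNorm, hrow, ciSup_const]

end Scaling

section Diagonalizers

variable {ι : Type*} [Fintype ι] [DecidableEq ι]

theorem subsingleton_support_col_of_diagonal_mul_eq {W : Matrix ι ι ℝ} {d e : ι → ℝ}
    (hd : Function.Injective d) (hW : diagonal d * W = W * diagonal e) (j : ι) :
    (Function.support (W.col j)).Subsingleton := by
  have eigenvalue_eq {i : ι} (hi : W i j ≠ 0) : d i = e j := by
    have hij : d i * W i j = W i j * e j := by
      simpa only [diagonal_mul, mul_diagonal] using congrFun₂ hW i j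
    exact mul_right_cancel₀ hi (hij.trans (mul_comm _ _))
  exact fun a ha b hb ↦ hd ((eigenvalue_eq ha).trans (eigenvalue_eq hb).symm)

variable {A V : Matrix ι ι ℝ} {d : ι → ℝ}

theorem mNorm_map_abs_mul_map_abs_inv_le_of_isDiag (hV : IsUnit V) (hd : Function.Injective d)
    (hAV : A * V = V * diagonal d) {S : Matrix ι ι ℝ} (hS : IsUnit S)
    (hAS : (S⁻¹ * A * S).IsDiag) :
    mNorm (V.map abs * V⁻¹.map abs) ≤ mNorm S * mNorm S⁻¹ := by
  have hVdet := (isUnit_iff_isUnit_det V).1 hV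
  have hSdet := (isUnit_iff_isUnit_det S).1 hS
  obtain ⟨e, he⟩ : ∃ e, diagonal e = S⁻¹ * A * S := ⟨_, hAS.diagonal_diag⟩
  have intertwines : diagonal d * (V⁻¹ * S) = V⁻¹ * S * diagonal e :=
    calc diagonal d * (V⁻¹ * S)
        = V⁻¹ * (V * diagonal d) * V⁻¹ * S := by
          rw [nonsing_inv_mul_cancel_left V _ hVdet, Matrix.mul_assoc]
      _ = V⁻¹ * A * S := by
          rw [← hAV, ← Matrix.mul_assoc, mul_nonsing_inv_cancel_right V _ hVdet]
      _ = V⁻¹ * S * diagonal e := by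
          rw [he, Matrix.mul_assoc V⁻¹ S, Matrix.mul_assoc S⁻¹,
            mul_nonsing_inv_cancel_left S _ hSdet, Matrix.mul_assoc]
  simpa only [mul_nonsing_inv_cancel_right S _ hSdet, mul_nonsing_inv_cancel_left V _ hVdet] using
    mNorm_map_abs_mul_map_abs_le V S⁻¹ (subsingleton_support_col_of_diagonal_mul_eq hd intertwines)

theorem exists_isDiag_mNorm_mul_mNorm_inv_eq [Nonempty ι] (hV : IsUnit V)
    (hAV : A * V = V * diagonal d) :
    ∃ S : Matrix ι ι ℝ, IsUnit S ∧ (S⁻¹ * A * S).IsDiag ∧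
      mNorm (V.map abs * V⁻¹.map abs) = mNorm S * mNorm S⁻¹ := by
  have hVdet := (isUnit_iff_isUnit_det V).1 hV
  set r := absRowSum V⁻¹
  have hr : ∀ i, 0 < r i := absRowSum_pos (isUnit_nonsing_inv_iff.2 hV)
  have left_inv : diagonal r⁻¹ * V⁻¹ * (V * diagonal r) = 1 := by
    rw [Matrix.mul_assoc, nonsing_inv_mul_cancel_left V _ hVdet, diagonal_mul_diagonal,
      ← diagonal_one]
    exact congrArg diagonal (funext fun i ↦ inv_mul_cancel₀ (hr i).ne')
  have inv_eq : (V * diagonal r)⁻¹ = diagonal r⁻¹ * V⁻¹ := inv_eq_left_inv left_inv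
  refine ⟨V * diagonal r, IsUnit.of_mul_eq_one_right _ left_inv, ?_, ?_⟩
  · have diagonalized : diagonal r⁻¹ * V⁻¹ * A * (V * diagonal r) =
        diagonal r⁻¹ * (diagonal d * diagonal r) := by
      rw [Matrix.mul_assoc, ← Matrix.mul_assoc A, hAV, Matrix.mul_assoc V, Matrix.mul_assoc,
        nonsing_inv_mul_cancel_left V _ hVdet]
    rw [inv_eq, diagonalized, diagonal_mul_diagonal, diagonal_mul_diagonal]
    exact isDiag_diagonal _
  · rw [inv_eq, mNorm_diagonal_inv_absRowSum_mul hr, mul_one, mNorm_mul_diagonal_absRowSum]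

theorem isLeast_mNorm_mul_mNorm_inv [Nonempty ι] (hV : IsUnit V) (hd : Function.Injective d)
    (hAV : A * V = V * diagonal d) :
    IsLeast {c : ℝ | ∃ S : Matrix ι ι ℝ,
        IsUnit S ∧ (S⁻¹ * A * S).IsDiag ∧ c = mNorm S * mNorm S⁻¹}
      (mNorm (V.map abs * V⁻¹.map abs)) := by
  refine ⟨exists_isDiag_mNorm_mul_mNorm_inv_eq hV hAV, ?_⟩
  rintro _ ⟨S, hS, hAS, rfl⟩
  exact mNorm_map_abs_mul_map_abs_inv_le_of_isDiag hV hd hAV hS hAS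

end Diagonalizers

/-- The matrix whose columns are the eigenvectors `(1, -p₁)` and `(1, -p₂)` of the companion matrix
of `(s+p₁)(s+p₂)`. -/
def companionEigenvectors (p₁ p₂ : ℝ) : Matrix (Fin 2) (Fin 2) ℝ :=
  !![1, 1; -p₁, -p₂]

theorem companion_mul_companionEigenvectors (p₁ p₂ : ℝ) :
    !![0, 1; -(p₁ * p₂), -(p₁ + p₂)] * companionEigenvectors p₁ p₂ =
      companionEigenvectors p₁ p₂ * diagonal ![-p₁, -p₂] := by
  ext i j
  fin_cases i <;> fin_cases j <;>
    simp [companionEigenvectors, mul_apply, Fin.sum_univ_two] <;> ring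

theorem det_companionEigenvectors (p₁ p₂ : ℝ) : (companionEigenvectors p₁ p₂).det = p₁ - p₂ := by
  rw [companionEigenvectors, det_fin_two_of]
  ring

theorem isUnit_companionEigenvectors {p₁ p₂ : ℝ} (h : p₁ ≠ p₂) :
    IsUnit (companionEigenvectors p₁ p₂) := by
  rw [isUnit_iff_isUnit_det, det_companionEigenvectors, isUnit_iff_ne_zero]
  exact sub_ne_zero.2 h

theorem map_abs_mul_map_abs_inv_companionEigenvectors (p₁ p₂ : ℝ) :
    (companionEigenvectors p₁ p₂).map abs * (companionEigenvectors p₁ p₂)⁻¹.map abs =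
      |p₂ - p₁|⁻¹ • !![|p₁| + |p₂|, 2; 2 * |p₁ * p₂|, |p₁| + |p₂|] := by
  rw [inv_def, det_companionEigenvectors, Ring.inverse_eq_inv', companionEigenvectors,
    adjugate_fin_two_of, abs_sub_comm]
  ext i j
  fin_cases i <;> fin_cases j <;>
    simp [mul_apply, Fin.sum_univ_two, abs_mul, abs_inv] <;> ring

theorem mNorm_map_abs_mul_map_abs_inv_companionEigenvectors (p₁ p₂ : ℝ) :
    mNorm ((companionEigenvectors p₁ p₂).map abs * (companionEigenvectors p₁ p₂)⁻¹.map abs) =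
      (|p₁| + |p₂| + 2 * max 1 |p₁ * p₂|) / |p₂ - p₁| := by
  have hsum : |(|p₁| + |p₂|)| = |p₁| + |p₂| := abs_of_nonneg (by positivity)
  set M := !![|p₁| + |p₂|, 2; 2 * |p₁ * p₂|, |p₁| + |p₂|] with hM
  have row_zero : absRowSum M 0 = |p₁| + |p₂| + 2 * 1 := by
    simp [hM, absRowSum, Fin.sum_univ_two, hsum]
  have row_one : absRowSum M 1 = |p₁| + |p₂| + 2 * |p₁ * p₂| := by
    simp [hM, absRowSum, Fin.sum_univ_two, hsum, add_comm]
  rw [map_abs_mul_map_abs_inv_companionEigenvectors, mNorm_smul, mNorm_fin_two, row_zero, row_one,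
    max_add_add_left, ← mul_max_of_nonneg _ _ zero_le_two, abs_inv, abs_abs, inv_mul_eq_div]

theorem second_order_min_condition_number_general
    (p₁ p₂ : ℝ) (h : p₁ ≠ p₂) (A : Matrix (Fin 2) (Fin 2) ℝ)
    (hA : A = !![0, 1; -(p₁ * p₂), -(p₁ + p₂)]) :
    IsLeast {c : ℝ | ∃ S : Matrix (Fin 2) (Fin 2) ℝ,
        IsUnit S ∧ (S⁻¹ * A * S).IsDiag ∧ c = mNorm S * mNorm S⁻¹}
      ((|p₁| + |p₂| + 2 * max 1 |p₁ * p₂|) / |p₂ - p₁|) := by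
  subst hA
  have eigenvalues_injective : Function.Injective ![-p₁, -p₂] := by
    simpa [Function.Injective, Fin.forall_fin_two] using ⟨h, h.symm⟩
  rw [← mNorm_map_abs_mul_map_abs_inv_companionEigenvectors]
  exact isLeast_mNorm_mul_mNorm_inv (isUnit_companionEigenvectors h) eigenvalues_injective
    (companion_mul_companionEigenvectors p₁ p₂)

/-- Example 1: for `0 < p₁ < p₂` and `A = [[0, 1], [-p₁ p₂, -(p₁ + p₂)]]` the
companion matrix of `(s+p₁)(s+p₂)`, the minimum of `‖S‖_∞ ‖S⁻¹‖_∞` over all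
invertible `S` with `S⁻¹ A S` diagonal equals
`(p₁ + p₂ + 2 max (1, p₁ p₂)) / (p₂ - p₁)`. -/
theorem second_order_min_condition_number
    (p₁ p₂ : ℝ) (hp₁ : 0 < p₁) (hp₁₂ : p₁ < p₂)
    (A : Matrix (Fin 2) (Fin 2) ℝ)
    (hA : A = !![0, 1; -(p₁ * p₂), -(p₁ + p₂)]) :
    IsLeast {c : ℝ | ∃ S : Matrix (Fin 2) (Fin 2) ℝ,
        IsUnit S ∧ (S⁻¹ * A * S).IsDiag ∧ c = mNorm S * mNorm S⁻¹}
      ((p₁ + p₂ + 2 * max 1 (p₁ * p₂)) / (p₂ - p₁)) := by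
  have hp₂ : 0 < p₂ := hp₁.trans hp₁₂
  simpa only [abs_of_pos hp₁, abs_of_pos hp₂, abs_of_pos (mul_pos hp₁ hp₂),
    abs_of_pos (sub_pos.2 hp₁₂)] using second_order_min_condition_number_general p₁ p₂ hp₁₂.ne A hA
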